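/- Consider the set of ordinals less than or equal to ω^ω, equipped with the subspace topology inherited from the order topology on the ordinals. The derived set of this space (the set of its accumulation points, with the subspace topology) is homeomorphic to the space itself. -/

import Mathlib

open Ordinal

/-! The accumulation points of the space `[0, d]` of ordinals are its limit ordinals, which are
the ordinals of the form `ω * (1 + a)`. The map `a ↦ ω * (1 + a)` is normal, so it is a
homeomorphism from the compact space `[0, c]` onto the limit ordinals in `[0, ω * (1 + c)]`, and
`ω * (1 + c) = c` as soon as `c` is a nonzero multiple of `ω ^ ω`.

The two occurrences of `Ordinal` in the theorem may live in different universes; since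
`Ordinal.lift` is also normal, the same homeomorphism principle identifies `[0, c]` with
`[0, lift c]`.
-/

open Set Order Topology

universe u v

section Topology

theorem image_val_derivedSet_univ {X : Type*} [TopologicalSpace X] {s : Set X} (hs : IsOpen s) :
    (↑) '' derivedSet (univ : Set s) = s ∩ derivedSet univ := by
  have derivedSet_univ_eq_preimage :
      derivedSet (univ : Set s) = (↑) ⁻¹' derivedSet (univ : Set X) := by
    ext x
    rw [mem_preimage, mem_derivedSet, mem_derivedSet,
      ← hs.isOpenEmbedding_subtypeVal.accPt_comap_iff, Filter.comap_principal, preimage_univ]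
  rw [derivedSet_univ_eq_preimage, Subtype.image_preimage_coe]

theorem derivedSet_univ_eq_isSuccLimit {α : Type*} [LinearOrder α] [SuccOrder α] [NoMaxOrder α]
    [TopologicalSpace α] [OrderTopology α] :
    derivedSet (univ : Set α) = {a | IsSuccLimit a} := by
  ext a
  refine ⟨AccPt.isSuccLimit, fun ha ↦ SuccOrder.accPt_principal.2 ⟨ha.not_isMin, fun b hb ↦ ?_⟩⟩
  rw [univ_inter]
  exact (not_covBy_iff hb).1 (ha.isSuccPrelimit b)

end Topology

section WellOrder

theorem image_Iic_initialSeg {α β : Type*} [PartialOrder α] [PartialOrder β] (f : α ≤i β) (a : α) :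
    f '' Iic a = Iic (f a) := by
  ext b
  refine ⟨?_, fun hb ↦ ?_⟩
  · rintro ⟨x, hx, rfl⟩
    exact f.le_iff_le.2 hx
  · obtain ⟨x, rfl⟩ := f.mem_range_of_le hb
    exact ⟨x, f.le_iff_le.1 hb, rfl⟩

variable {α β : Type*} [LinearOrder α] [LinearOrder β]
  [WellFoundedLT α] [WellFoundedLT β] [TopologicalSpace α] [OrderTopology α]
  [TopologicalSpace β] [OrderTopology β]

attribute [local instance] WellFoundedLT.toOrderBot
  WellFoundedLT.conditionallyCompleteLinearOrderBot in
theorem isCompact_Iic_of_wellFoundedLT (a : α) : IsCompact (Iic a) := by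
  have : Nonempty α := ⟨a⟩
  exact Icc_bot (a := a) ▸ isCompact_Icc

theorem isClosedEmbedding_domRestrict_Iic_of_isNormal {f : α → β} (hf : IsNormal f) (a : α) :
    IsClosedEmbedding ((Iic a).domRestrict f) :=
  have : CompactSpace (Iic a) := isCompact_iff_compactSpace.1 (isCompact_Iic_of_wellFoundedLT a)
  (hf.continuous.comp continuous_subtype_val).isClosedEmbedding
    (hf.strictMono.injective.comp Subtype.val_injective)

/-- A normal function between well-orders restricts to a homeomorphism from each closed initial
segment onto its image. -/
noncomputable def homeomorphImageIic {f : α → β} (hf : IsNormal f) (a : α) :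
    Iic a ≃ₜ f '' Iic a :=
  (isClosedEmbedding_domRestrict_Iic_of_isNormal hf a).isEmbedding.toHomeomorph.trans
    (.setCongr (range_domRestrict f (Iic a)))

end WellOrder

section Lift

theorem lift_opow (a b : Ordinal.{u}) : lift.{v} (a ^ b) = lift.{v} a ^ lift.{v} b := by
  obtain lt_one | rfl | one_lt := lt_trichotomy a 1
  · obtain rfl := Order.lt_one_iff.1 lt_one
    obtain rfl | hb := eq_or_ne b 0
    · simp
    · have lift_ne_zero : lift.{v} b ≠ 0 := by rwa [← lift_zero.{u, v}, Ne, lift_inj]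
      rw [zero_opow hb, lift_zero, zero_opow lift_ne_zero]
  · simp
  have one_lt_lift : 1 < lift.{v} a := by simpa using lift_lt.{v}.2 one_lt
  have lift_normal : IsNormal lift.{v, u} := liftInitialSeg.isNormal
  refine congrFun (((lift_normal.comp (isNormal_opow one_lt)).ext_iff
    ((isNormal_opow one_lt_lift).comp lift_normal)).2 ⟨?_, fun b hb ↦ ?_⟩) b
  · simp
  · simp only [Function.comp_apply] at hb ⊢
    rw [opow_succ, lift_mul, hb, lift_succ, opow_succ]

/-- Raising the universe level does not change the space of ordinals `≤ c`. -/
noncomputable def homeomorphIicLift (c : Ordinal.{u}) : Iic c ≃ₜ Iic (lift.{v} c) :=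
  (homeomorphImageIic liftInitialSeg.isNormal c).trans
    (.setCongr (image_Iic_initialSeg liftInitialSeg c))

/-- The space of ordinals `≤ c` depends only on `c` up to `lift`. -/
noncomputable def homeomorphIicOfLiftEq {c : Ordinal.{u}} {d : Ordinal.{v}}
    (h : lift.{v} c = lift.{u} d) : Iic c ≃ₜ Iic d :=
  (homeomorphIicLift c).trans <|
    (Homeomorph.setCongr (congrArg Iic h)).trans (homeomorphIicLift d).symm

end Lift

section DerivedSet

theorem isNormal_omega0_mul_one_add : IsNormal fun a : Ordinal.{u} ↦ ω * (1 + a) :=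
  (isNormal_mul_right omega0_pos).comp (isNormal_add_right 1)

theorem isSuccLimit_iff_exists_omega0_mul_one_add {a : Ordinal.{u}} :
    IsSuccLimit a ↔ ∃ b, ω * (1 + b) = a := by
  rw [Ordinal.isSuccLimit_iff, isSuccPrelimit_iff_omega0_dvd]
  constructor
  · rintro ⟨h0, d, rfl⟩
    have one_le : 1 ≤ d := one_le_iff_ne_zero.2 (right_ne_zero_of_mul h0)
    exact ⟨d - 1, by rw [Ordinal.add_sub_cancel_of_le one_le]⟩
  · rintro ⟨b, rfl⟩
    exact ⟨mul_ne_zero omega0_ne_zero (by simp), dvd_mul_right _ _⟩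

theorem image_omega0_mul_one_add_Iic (c : Ordinal.{u}) :
    (fun a ↦ ω * (1 + a)) '' Iic c = Iic (ω * (1 + c)) ∩ {a | IsSuccLimit a} := by
  ext x
  simp only [mem_image, mem_inter_iff, mem_Iic, mem_ofPred_eq,
    isSuccLimit_iff_exists_omega0_mul_one_add]
  constructor
  · rintro ⟨a, ha, rfl⟩
    exact ⟨isNormal_omega0_mul_one_add.monotone ha, a, rfl⟩
  · rintro ⟨hx, a, rfl⟩
    exact ⟨a, isNormal_omega0_mul_one_add.strictMono.le_iff_le.1 hx, rfl⟩

theorem image_val_derivedSet_univ_Iic (c : Ordinal.{u}) :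
    (↑) '' derivedSet (univ : Set (Iic c)) = Iic c ∩ {a | IsSuccLimit a} := by
  have isOpen_Iic : IsOpen (Iic c) := Iio_succ c ▸ isOpen_Iio
  rw [image_val_derivedSet_univ isOpen_Iic, derivedSet_univ_eq_isSuccLimit]

/-- The accumulation points of the ordinals `≤ ω * (1 + c)` are enumerated homeomorphically by
`a ↦ ω * (1 + a)` for `a ≤ c`. -/
noncomputable def derivedSetHomeomorphIic (c : Ordinal.{u}) :
    derivedSet (univ : Set (Iic (ω * (1 + c)))) ≃ₜ Iic c :=
  (IsEmbedding.subtypeVal.homeomorphImage _).trans <|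
    (Homeomorph.setCongr ((image_val_derivedSet_univ_Iic _).trans
      (image_omega0_mul_one_add_Iic c).symm)).trans
    (homeomorphImageIic isNormal_omega0_mul_one_add c).symm

theorem omega0_mul_one_add_eq_self {c : Ordinal.{u}} (h0 : c ≠ 0) (h : ω ^ ω ∣ c) :
    ω * (1 + c) = c := by
  have omega0_le : ω ≤ c := (right_le_opow ω one_lt_omega0).trans (le_of_dvd h0 h)
  rw [one_add_of_omega0_le omega0_le, mul_eq_right_iff_opow_omega0_dvd.2 h]

end DerivedSet

theorem stmt_4_general {c : Ordinal.{u}} {d : Ordinal.{v}} (h0 : c ≠ 0) (h : ω ^ ω ∣ c)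
    (hcd : lift.{v} c = lift.{u} d) :
    Nonempty (derivedSet (univ : Set {o : Ordinal.{u} // o ≤ c}) ≃ₜ
      {o : Ordinal.{v} // o ≤ d}) := by
  have e := derivedSetHomeomorphIic c
  rw [omega0_mul_one_add_eq_self h0 h] at e
  exact ⟨e.trans (homeomorphIicOfLiftEq hcd)⟩

/-- The derived set (set of accumulation points) of the space of ordinals `≤ ω^ω`
(with the subspace topology from the order topology on the ordinals) is homeomorphic
to the space itself. -/
theorem stmt_4 :
    Nonempty ((derivedSet (Set.univ : Set {o : Ordinal // o ≤ omega0 ^ omega0})) ≃ₜ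
      {o : Ordinal // o ≤ omega0 ^ omega0}) := by
  exact stmt_4_general (opow_ne_zero ω omega0_ne_zero) dvd_rfl
    (by simp only [lift_opow, lift_omega0])
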